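/- Let f₀ : ℝ → ℝ be a bounded continuous function. Then the function F(ρ,η) = (ρ^{3/2}/2) ∫_ℝ f₀(y)·(ρ² + (η−y)²)^{−3/2} dy is twice continuously differentiable on the upper half-plane H and satisfies the eigenvalue equation ρ²(∂²F/∂ρ² + ∂²F/∂η²) = (3/4)·F at every point of H. -/

import Mathlib

/-!
The kernel `(ρ / (ρ² + (η - y)²)) ^ (3/2)` is the translate of an inverted power `ρ ^ (3/2)`, hence
an eigenfunction with eigenvalue `(3/2) * (3/2 - 1) = 3/4`; the content is that one may
differentiate under the integral sign.

To do this once for all orders, consider the family of moments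
`M k s (ρ, η) = ∫ f y * (η - y) ^ k * (ρ² + (η - y)²) ^ s dy`, which converges for
`k + 2 * s < -1`. Since `|η - y| ^ k * Q ^ s ≤ Q ^ (s + k / 2)` with `Q = ρ² + (η - y)²`, and
`1 + y² ≤ K * Q` locally uniformly in `(ρ, η)`, dominated differentiation (`hasFDerivAt_moment`)
gives
`∂_ρ M k s = 2 s ρ M k (s-1)` and `∂_η M k s = k M (k-1) s + 2 s M (k+1) (s-1)`.
The family is thus closed under differentiation, so an induction shows that each member is `C^n`
for all `n` (`contDiffOn_moment`). The eigenvalue equation follows from the two formulas and the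
identity `ρ² M 0 s + M 2 s = M 0 (s+1)`.
-/

open MeasureTheory

/-- Partial derivative in the first variable (ρ). -/
noncomputable def pdr (f : ℝ → ℝ → ℝ) (ρ η : ℝ) : ℝ := deriv (fun r => f r η) ρ

/-- Partial derivative in the second variable (η). -/
noncomputable def pde (f : ℝ → ℝ → ℝ) (ρ η : ℝ) : ℝ := deriv (fun e => f ρ e) η

/-- The smeared eigenfunction with boundary data f₀. -/
noncomputable def smearedF (f₀ : ℝ → ℝ) (ρ η : ℝ) : ℝ :=
  ρ ^ ((3 : ℝ) / 2) / 2 * ∫ y : ℝ, f₀ y * (ρ ^ 2 + (η - y) ^ 2) ^ (-(3 : ℝ) / 2)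

/-- The squared Euclidean distance from `p = (ρ, η)` to the boundary point `(0, y)`. -/
noncomputable def distSq (p : ℝ × ℝ) (y : ℝ) : ℝ := p.1 ^ 2 + (p.2 - y) ^ 2

/-- The kernel `(η - y) ^ k * (ρ² + (η - y)²) ^ s`. -/
noncomputable def ker (k : ℕ) (s : ℝ) (p : ℝ × ℝ) (y : ℝ) : ℝ := (p.2 - y) ^ k * distSq p y ^ s

/-- The integral of `f` against the kernel `ker k s`; it converges for bounded measurable `f` when
`k + 2 * s < -1` and `0 < ρ`. -/
noncomputable def moment (f : ℝ → ℝ) (k : ℕ) (s : ℝ) (p : ℝ × ℝ) : ℝ := ∫ y, f y * ker k s p y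

lemma distSq_pos {p : ℝ × ℝ} (hp : 0 < p.1) (y : ℝ) : 0 < distSq p y := by
  unfold distSq; positivity

lemma abs_ker_le (k : ℕ) (s : ℝ) {p : ℝ × ℝ} (hp : 0 < p.1) (y : ℝ) :
    |ker k s p y| ≤ distSq p y ^ (s + k / 2) := by
  have hq := distSq_pos hp y
  have h1 : |p.2 - y| ≤ distSq p y ^ (1 / 2 : ℝ) := by
    rw [← Real.sqrt_eq_rpow]
    apply Real.abs_le_sqrt
    unfold distSq; nlinarith [sq_nonneg p.1]
  have h2 : |p.2 - y| ^ k ≤ distSq p y ^ ((k : ℝ) / 2) := by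
    calc |p.2 - y| ^ k ≤ (distSq p y ^ (1 / 2 : ℝ)) ^ k := by gcongr
      _ = distSq p y ^ ((k : ℝ) / 2) := by
        rw [← Real.rpow_mul_natCast hq.le]; congr 1; ring
  rw [ker, abs_mul, abs_pow, abs_of_pos (Real.rpow_pos_of_pos hq s), Real.rpow_add hq, mul_comm]
  gcongr

lemma abs_fst_mul_ker_le (k : ℕ) (s : ℝ) {p : ℝ × ℝ} (hp : 0 < p.1) (y : ℝ) :
    |p.1 * ker k (s - 1) p y| ≤ distSq p y ^ (s + k / 2 - 1 / 2) := by
  have hq := distSq_pos hp y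
  have h1 : |p.1| ≤ distSq p y ^ (1 / 2 : ℝ) := by
    rw [← Real.sqrt_eq_rpow]
    apply Real.abs_le_sqrt
    unfold distSq; nlinarith [sq_nonneg (p.2 - y)]
  have h2 := abs_ker_le k (s - 1) hp y
  rw [abs_mul, show s + k / 2 - 1 / 2 = 1 / 2 + (s - 1 + k / 2) by ring, Real.rpow_add hq]
  gcongr

lemma abs_natCast_mul_ker_le (k : ℕ) (s : ℝ) {p : ℝ × ℝ} (hp : 0 < p.1) (y : ℝ) :
    |k * ker (k - 1) s p y| ≤ k * distSq p y ^ (s + k / 2 - 1 / 2) := by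
  rcases k with _ | k
  · simp
  · have h2 := abs_ker_le k s hp y
    rw [abs_mul, Nat.abs_cast, Nat.add_sub_cancel,
      show s + ((k + 1 : ℕ) : ℝ) / 2 - 1 / 2 = s + k / 2 by push_cast; ring]
    gcongr

/-- On the strip-like neighbourhood `a < ρ`, `|η| < B`, the powers of the distance are dominated
uniformly by powers of the Japanese bracket. -/
lemma exists_rpow_distSq_le {a B : ℝ} (ha : 0 < a) {t : ℝ} (ht : t < 0) :
    ∃ D : ℝ, 0 ≤ D ∧ ∀ p : ℝ × ℝ, a < p.1 → |p.2| < B → ∀ y : ℝ,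
      distSq p y ^ t ≤ D * (1 + y ^ 2) ^ t := by
  set K : ℝ := (1 + 2 * B ^ 2) / a ^ 2 + 2 with hK
  have hK0 : 0 < K := by positivity
  refine ⟨K⁻¹ ^ t, by positivity, fun p h1 h2 y => ?_⟩
  have hy : (0 : ℝ) < 1 + y ^ 2 := by positivity
  rw [← Real.mul_rpow (by positivity) hy.le]
  apply Real.rpow_le_rpow_of_nonpos (by positivity) _ ht.le
  rw [inv_mul_le_iff₀ hK0]
  have h3 : p.2 ^ 2 ≤ B ^ 2 := sq_le_sq' (by linarith [(abs_lt.1 h2).1]) (abs_lt.1 h2).2.le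
  have h4 : a ^ 2 ≤ p.1 ^ 2 := by gcongr
  have h5 : 1 + 2 * B ^ 2 ≤ (1 + 2 * B ^ 2) / a ^ 2 * p.1 ^ 2 := by
    rw [div_mul_eq_mul_div, le_div_iff₀ (by positivity)]; gcongr
  have h6 : 0 ≤ (1 + 2 * B ^ 2) / a ^ 2 * (p.2 - y) ^ 2 := by positivity
  unfold distSq
  nlinarith [sq_nonneg (2 * p.2 - y), sq_nonneg p.1]

lemma integrable_bracket {t : ℝ} (ht : t < -(1 / 2)) :
    Integrable (fun y : ℝ => (1 + y ^ 2) ^ t) := by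
  have h := integrable_rpow_neg_one_add_norm_sq (E := ℝ) (μ := volume) (r := -2 * t)
    (by simp; linarith)
  convert h using 3 with y
  · simp
  · ring

lemma continuous_ker (k : ℕ) (s : ℝ) {p : ℝ × ℝ} (hp : 0 < p.1) : Continuous (ker k s p) := by
  have h : Continuous (distSq p) := by unfold distSq; fun_prop
  have h2 : Continuous fun y => distSq p y ^ s :=
    h.rpow_const fun y => Or.inl (distSq_pos hp y).ne'
  unfold ker
  fun_prop

lemma integrable_moment {f : ℝ → ℝ} (hc : Continuous f) {C : ℝ} (hC : ∀ y, |f y| ≤ C)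
    {k : ℕ} {s : ℝ} (hks : k + 2 * s < -1) {p : ℝ × ℝ} (hp : 0 < p.1) :
    Integrable fun y => f y * ker k s p y := by
  have ht : s + k / 2 < -(1 / 2) := by linarith
  obtain ⟨D, hD, h⟩ := exists_rpow_distSq_le (a := p.1 / 2) (B := |p.2| + 1) (by positivity)
    (show s + k / 2 < 0 by linarith)
  refine (((integrable_bracket ht).const_mul D).const_mul C).mono'
    (hc.mul (continuous_ker k s hp)).aestronglyMeasurable (.of_forall fun y => ?_)
  rw [Real.norm_eq_abs, abs_mul]
  have hC0 : 0 ≤ C := (abs_nonneg _).trans (hC 0)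
  have := (abs_ker_le k s hp y).trans (h p (by linarith) (by linarith) y)
  gcongr
  exact hC y

lemma hasFDerivAt_ker (k : ℕ) (s : ℝ) {p : ℝ × ℝ} (hp : 0 < p.1) (y : ℝ) :
    HasFDerivAt (fun p => ker k s p y)
      ((2 * s * (p.1 * ker k (s - 1) p y)) • ContinuousLinearMap.fst ℝ ℝ ℝ
        + (k * ker (k - 1) s p y + 2 * s * ker (k + 1) (s - 1) p y) •
          ContinuousLinearMap.snd ℝ ℝ ℝ) p := by
  have h1 : HasFDerivAt (fun p : ℝ × ℝ => p.1) (ContinuousLinearMap.fst ℝ ℝ ℝ) p := hasFDerivAt_fst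
  have h2 : HasFDerivAt (fun p : ℝ × ℝ => p.2 - y) (ContinuousLinearMap.snd ℝ ℝ ℝ) p :=
    hasFDerivAt_snd.sub_const y
  have h3 := ((h1.pow 2).add (h2.pow 2)).rpow_const (p := s) (Or.inl (distSq_pos hp y).ne')
  have h4 := (h2.pow k).mul h3
  refine h4.congr_fderiv ?_
  ext <;> simp [ker, distSq] <;> ring

/-- Dominated differentiation under the integral sign. For `k = 0` the term containing
`moment f (k - 1) s` carries the factor `0`. -/
lemma hasFDerivAt_moment {f : ℝ → ℝ} (hc : Continuous f) {C : ℝ} (hC : ∀ y, |f y| ≤ C)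
    {k : ℕ} {s : ℝ} (hks : k + 2 * s < -1) {p : ℝ × ℝ} (hp : 0 < p.1) :
    HasFDerivAt (moment f k s)
      ((2 * s * (p.1 * moment f k (s - 1) p)) • ContinuousLinearMap.fst ℝ ℝ ℝ
        + (k * moment f (k - 1) s p + 2 * s * moment f (k + 1) (s - 1) p) •
          ContinuousLinearMap.snd ℝ ℝ ℝ) p := by
  have ht : s + k / 2 - 1 / 2 < -(1 / 2) := by linarith
  obtain ⟨D, hD, h⟩ := exists_rpow_distSq_le (a := p.1 / 2) (B := |p.2| + 1) (by positivity)
    (show s + k / 2 - 1 / 2 < 0 by linarith)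
  have hC0 : 0 ≤ C := (abs_nonneg _).trans (hC 0)
  have hopen : IsOpen {q : ℝ × ℝ | p.1 / 2 < q.1 ∧ |q.2| < |p.2| + 1} :=
    (isOpen_lt continuous_const continuous_fst).inter
      (isOpen_lt continuous_snd.abs continuous_const)
  have hS := hopen.mem_nhds (x := p) ⟨by linarith, by linarith⟩
  have hi0 := integrable_moment hc hC hks hp
  have hi1 := integrable_moment hc hC (k := k) (s := s - 1) (by linarith) hp
  have hi2 := integrable_moment hc hC (k := k + 1) (s := s - 1) (by push_cast; linarith) hp
  have hi3 := integrable_moment hc hC (k := k - 1) (s := s)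
    (by have : ((k - 1 : ℕ) : ℝ) ≤ k := by exact_mod_cast Nat.sub_le k 1
        linarith) hp
  have hia : Integrable fun y => 2 * s * (p.1 * (f y * ker k (s - 1) p y)) :=
    (hi1.const_mul _).const_mul _
  have hib : Integrable fun y => k * (f y * ker (k - 1) s p y)
      + 2 * s * (f y * ker (k + 1) (s - 1) p y) := (hi3.const_mul _).add (hi2.const_mul _)
  have hia' := hia.smul_const (ContinuousLinearMap.fst ℝ ℝ ℝ)
  have hib' := hib.smul_const (ContinuousLinearMap.snd ℝ ℝ ℝ)
  have hF' : ∀ y, f y • ((2 * s * (p.1 * ker k (s - 1) p y)) • ContinuousLinearMap.fst ℝ ℝ ℝ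
        + (k * ker (k - 1) s p y + 2 * s * ker (k + 1) (s - 1) p y) •
          ContinuousLinearMap.snd ℝ ℝ ℝ) =
      (2 * s * (p.1 * (f y * ker k (s - 1) p y))) • ContinuousLinearMap.fst ℝ ℝ ℝ
        + (k * (f y * ker (k - 1) s p y) + 2 * s * (f y * ker (k + 1) (s - 1) p y)) •
          ContinuousLinearMap.snd ℝ ℝ ℝ := by
    intro y; ext <;> simp <;> ring
  have key := hasFDerivAt_integral_of_dominated_of_fderiv_le (𝕜 := ℝ) (μ := volume)
    (F := fun q y => f y * ker k s q y)
    (F' := fun q y => f y • ((2 * s * (q.1 * ker k (s - 1) q y)) • ContinuousLinearMap.fst ℝ ℝ ℝ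
        + (k * ker (k - 1) s q y + 2 * s * ker (k + 1) (s - 1) q y) •
          ContinuousLinearMap.snd ℝ ℝ ℝ))
    (bound := fun y => C * ((4 * |s| + k) * (D * (1 + y ^ 2) ^ (s + k / 2 - 1 / 2))))
    hS ?_ hi0 ?_ ?_ ((((integrable_bracket ht).const_mul D).const_mul _).const_mul C) ?_
  · refine key.congr_fderiv ?_
    simp_rw [hF']
    rw [integral_add hia' hib', integral_smul_const,
      integral_smul_const, integral_add (hi3.const_mul _) (hi2.const_mul _)]
    simp only [integral_const_mul, moment]
  · filter_upwards [hS] with q hq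
    exact (hc.mul (continuous_ker k s (by linarith [hq.1]))).aestronglyMeasurable
  · simp_rw [hF']
    exact (hia'.add hib').aestronglyMeasurable
  · refine .of_forall fun y q hq => ?_
    have hq0 : 0 < q.1 := by linarith [hq.1]
    have e1 := abs_fst_mul_ker_le k s hq0 y
    have e2 := abs_natCast_mul_ker_le k s hq0 y
    have e3 := abs_ker_le (k + 1) (s - 1) hq0 y
    rw [show s - 1 + ((k + 1 : ℕ) : ℝ) / 2 = s + k / 2 - 1 / 2 by push_cast; ring] at e3
    have e4 := h q hq.1 hq.2 y
    set T := distSq q y ^ (s + k / 2 - 1 / 2)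
    set u := D * (1 + y ^ 2) ^ (s + k / 2 - 1 / 2)
    rw [norm_smul]
    refine mul_le_mul (hC y) ?_ (norm_nonneg _) hC0
    calc _ ≤ |2 * s * (q.1 * ker k (s - 1) q y)| * 1
          + |k * ker (k - 1) s q y + 2 * s * ker (k + 1) (s - 1) q y| * 1 := by
          refine (norm_add_le _ _).trans ?_
          rw [norm_smul, norm_smul, Real.norm_eq_abs, Real.norm_eq_abs]
          gcongr
          · exact ContinuousLinearMap.norm_fst_le ..
          · exact ContinuousLinearMap.norm_snd_le ..
      _ ≤ 2 * |s| * T + (k * T + 2 * |s| * T) := by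
          rw [mul_one, mul_one, abs_mul, abs_mul 2 s, abs_two]
          gcongr
          refine (abs_add_le _ _).trans ?_
          rw [abs_mul (2 * s), abs_mul 2 s, abs_two]
          gcongr
      _ = (4 * |s| + k) * T := by ring
      _ ≤ _ := by gcongr
  · exact .of_forall fun y q hq =>
      (hasFDerivAt_ker k s (by linarith [hq.1]) y).const_mul (f y)

lemma contDiffOn_moment {f : ℝ → ℝ} (hc : Continuous f) {C : ℝ} (hC : ∀ y, |f y| ≤ C)
    (n : ℕ) : ∀ {k : ℕ} {s : ℝ}, k + 2 * s < -1 →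
      ContDiffOn ℝ n (moment f k s) {p : ℝ × ℝ | 0 < p.1} := by
  have hopen : IsOpen {p : ℝ × ℝ | 0 < p.1} := isOpen_lt continuous_const continuous_fst
  induction n with
  | zero =>
    intro k s hks
    rw [Nat.cast_zero, contDiffOn_zero]
    exact fun p hp => (hasFDerivAt_moment hc hC hks hp).continuousAt.continuousWithinAt
  | succ n ih =>
    intro k s hks
    push_cast
    rw [contDiffOn_succ_iff_hasFDerivWithinAt_of_uniqueDiffOn hopen.uniqueDiffOn]
    refine ⟨by simp, _, ?_, fun p hp => (hasFDerivAt_moment hc hC hks hp).hasFDerivWithinAt⟩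
    have h1 := ih (k := k) (s := s - 1) (by linarith)
    have h2 := ih (k := k + 1) (s := s - 1) (by push_cast; linarith)
    have h3 := ih (k := k - 1) (s := s)
      (by have : ((k - 1 : ℕ) : ℝ) ≤ k := by exact_mod_cast Nat.sub_le k 1
          linarith)
    exact ((contDiffOn_const.mul (contDiffOn_fst.mul h1)).smul contDiffOn_const).add
      (((contDiffOn_const.mul h3).add (contDiffOn_const.mul h2)).smul contDiffOn_const)

lemma hasDerivAt_moment_fst {f : ℝ → ℝ} (hc : Continuous f) {C : ℝ} (hC : ∀ y, |f y| ≤ C)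
    {k : ℕ} {s : ℝ} (hks : k + 2 * s < -1) {ρ : ℝ} (hρ : 0 < ρ) (η : ℝ) :
    HasDerivAt (fun r => moment f k s (r, η)) (2 * s * (ρ * moment f k (s - 1) (ρ, η))) ρ := by
  have h := (hasFDerivAt_moment hc hC hks (p := (ρ, η)) hρ).comp_hasDerivAt ρ
    ((hasDerivAt_id ρ).prodMk (hasDerivAt_const ρ η))
  simpa [Function.comp_def] using h

lemma hasDerivAt_moment_snd {f : ℝ → ℝ} (hc : Continuous f) {C : ℝ} (hC : ∀ y, |f y| ≤ C)
    {k : ℕ} {s : ℝ} (hks : k + 2 * s < -1) {ρ : ℝ} (hρ : 0 < ρ) (η : ℝ) :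
    HasDerivAt (fun e => moment f k s (ρ, e))
      (k * moment f (k - 1) s (ρ, η) + 2 * s * moment f (k + 1) (s - 1) (ρ, η)) η := by
  have h := (hasFDerivAt_moment hc hC hks (p := (ρ, η)) hρ).comp_hasDerivAt η
    ((hasDerivAt_const η ρ).prodMk (hasDerivAt_id η))
  simpa [Function.comp_def] using h

/-- The integrated form of `Q * Q ^ s = Q ^ (s + 1)`. -/
lemma moment_two_add {f : ℝ → ℝ} (hc : Continuous f) {C : ℝ} (hC : ∀ y, |f y| ≤ C)
    {s : ℝ} (hs : 2 + 2 * s < -1) {p : ℝ × ℝ} (hp : 0 < p.1) :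
    p.1 ^ 2 * moment f 0 s p + moment f 2 s p = moment f 0 (s + 1) p := by
  have h0 := integrable_moment hc hC (k := 0) (s := s) (by push_cast; linarith) hp
  have h2 := integrable_moment hc hC (k := 2) (s := s) (by push_cast; linarith) hp
  unfold moment
  rw [← integral_const_mul, ← integral_add (h0.const_mul _) h2]
  congr 1 with y
  simp only [ker]
  rw [Real.rpow_add_one (distSq_pos hp y).ne']
  nth_rewrite 4 [distSq]
  ring

lemma smearedF_eq (f₀ : ℝ → ℝ) (ρ η : ℝ) :
    smearedF f₀ ρ η = ρ ^ ((3 : ℝ) / 2) / 2 * moment f₀ 0 (-(3 : ℝ) / 2) (ρ, η) := by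
  simp [smearedF, moment, ker, distSq]

/-- The smeared eigenfunction is C² on the upper half-plane and is an
eigenfunction of the hyperbolic Laplacian with eigenvalue 3/4. -/
theorem smeared_is_eigenfunction (f₀ : ℝ → ℝ) (hc : Continuous f₀)
    (hb : ∃ C : ℝ, ∀ y : ℝ, |f₀ y| ≤ C) :
    ContDiffOn ℝ 2 (fun p : ℝ × ℝ => smearedF f₀ p.1 p.2) {p : ℝ × ℝ | 0 < p.1} ∧
    ∀ ρ η : ℝ, 0 < ρ →
      ρ ^ 2 * (pdr (pdr (smearedF f₀)) ρ η + pde (pde (smearedF f₀)) ρ η)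
        = (3 / 4) * smearedF f₀ ρ η := by
  obtain ⟨C, hC⟩ := hb
  constructor
  · simp_rw [smearedF_eq]
    refine ContDiffOn.mul ?_ (contDiffOn_moment hc hC 2 (by norm_num))
    exact (contDiffOn_fst.rpow_const_of_ne fun p hp => ne_of_gt hp).div_const 2
  · intro ρ η hρ
    have hpow : ∀ (t : ℝ) {r : ℝ}, 0 < r → HasDerivAt (fun r => r ^ t) (t * r ^ (t - 1)) r :=
      fun t r hr => Real.hasDerivAt_rpow_const (Or.inl hr.ne')
    have hr1 : ∀ r, 0 < r → pdr (smearedF f₀) r η =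
        3 / 4 * r ^ ((1 : ℝ) / 2) * moment f₀ 0 (-3 / 2) (r, η)
          - 3 / 2 * (r ^ ((3 : ℝ) / 2) * (r * moment f₀ 0 (-5 / 2) (r, η))) := by
      intro r hr
      have h := ((hpow (3 / 2) hr).div_const 2).mul
        (hasDerivAt_moment_fst hc hC (k := 0) (s := -3 / 2) (by norm_num) hr η)
      unfold pdr
      simp_rw [smearedF_eq]
      refine h.deriv.trans ?_
      norm_num
      ring
    have hr2 : pdr (pdr (smearedF f₀)) ρ η =
        3 / 8 * ρ ^ (-(1 : ℝ) / 2) * moment f₀ 0 (-3 / 2) (ρ, η)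
          - 9 / 4 * (ρ ^ ((1 : ℝ) / 2) * (ρ * moment f₀ 0 (-5 / 2) (ρ, η)))
          - 9 / 4 * (ρ ^ ((1 : ℝ) / 2) * (ρ * moment f₀ 0 (-5 / 2) (ρ, η)))
          - 3 / 2 * ρ ^ ((3 : ℝ) / 2) * moment f₀ 0 (-5 / 2) (ρ, η)
          + 15 / 2 * ρ ^ ((3 : ℝ) / 2) * (ρ ^ 2 * moment f₀ 0 (-7 / 2) (ρ, η)) := by
      have hA := hasDerivAt_moment_fst hc hC (k := 0) (s := -3 / 2) (by norm_num) hρ η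
      have hB := hasDerivAt_moment_fst hc hC (k := 0) (s := -5 / 2) (by norm_num) hρ η
      have h := (((hpow (1 / 2) hρ).const_mul (3 / 4)).mul hA).sub
        (((hpow (3 / 2) hρ).mul ((hasDerivAt_id ρ).mul hB)).const_mul (3 / 2))
      have heq : (fun r => pdr (smearedF f₀) r η) =ᶠ[nhds ρ] _ :=
        Filter.eventually_of_mem (Ioi_mem_nhds hρ) hr1
      rw [pdr, heq.deriv_eq]
      refine h.deriv.trans ?_
      norm_num
      ring
    have he1 : ∀ e, pde (smearedF f₀) ρ e =
        ρ ^ ((3 : ℝ) / 2) / 2 * (-3 * moment f₀ 1 (-5 / 2) (ρ, e)) := by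
      intro e
      have h := (hasDerivAt_moment_snd hc hC (k := 0) (s := -3 / 2) (by norm_num) hρ e).const_mul
        (ρ ^ ((3 : ℝ) / 2) / 2)
      unfold pde
      simp_rw [smearedF_eq]
      refine h.deriv.trans ?_
      norm_num
    have he2 : pde (pde (smearedF f₀)) ρ η =
        ρ ^ ((3 : ℝ) / 2) / 2 *
          (-3 * (moment f₀ 0 (-5 / 2) (ρ, η) - 5 * moment f₀ 2 (-7 / 2) (ρ, η))) := by
      have h := ((hasDerivAt_moment_snd hc hC (k := 1) (s := -5 / 2) (by norm_num) hρ
        η).const_mul (-3)).const_mul (ρ ^ ((3 : ℝ) / 2) / 2)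
      rw [pde]
      simp_rw [he1]
      refine h.deriv.trans ?_
      norm_num
      left
      ring
    have hm := moment_two_add hc hC (s := -7 / 2) (by norm_num) (p := (ρ, η)) hρ
    rw [show (-7 / 2 + 1 : ℝ) = -5 / 2 by norm_num] at hm
    -- All powers of `ρ` are expressed through `ρ ^ (-1/2)`.
    have p1 : ρ ^ ((1 : ℝ) / 2) = ρ ^ (-(1 : ℝ) / 2) * ρ := by
      rw [← Real.rpow_add_one hρ.ne']; norm_num
    have p2 : ρ ^ ((3 : ℝ) / 2) = ρ ^ (-(1 : ℝ) / 2) * ρ * ρ := by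
      rw [← p1, ← Real.rpow_add_one hρ.ne']; norm_num
    rw [hr2, he2, smearedF_eq, p1, p2, ← hm]
    ring
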